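/- Let k ≥ 1 be an integer, let B ⊆ S, let S' ⊆ S, and suppose X ⊆ S' with |X| ≤ k maximizes Δ(·|B) among all subsets of S' of cardinality at most k. Then for every Z ⊆ S', it holds that Δ(Z | B ∪ X) ≤ max(|Z|/k, 1)·Δ(X|B). In particular, if |Z| ≤ min(k(n−1), m) for integers n ≥ 2 and m ≥ k, then Δ(Z | B ∪ X) ≤ min(n−1, m/k)·Δ(X|B). -/

import Mathlib

open Finset

variable {α : Type*}

/-- `f` is monotone on finsets. -/
def IsMonotoneFn (f : Finset α → ℝ) : Prop := ∀ A B : Finset α, A ⊆ B → f A ≤ f B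

/-- `f` is submodular. -/
def IsSubmodularFn [DecidableEq α] (f : Finset α → ℝ) : Prop :=
  ∀ A B : Finset α, A ⊆ B → ∀ s ∉ B, f (insert s A) - f A ≥ f (insert s B) - f B

/-- Marginal contribution Δ(A|B) = f(A ∪ B) − f(B). -/
def marg [DecidableEq α] (f : Finset α → ℝ) (A B : Finset α) : ℝ := f (A ∪ B) - f B

/-- Δ^l(A|B): best marginal of a subset of `A` of size at most `l`. -/
noncomputable def margSup [DecidableEq α] (f : Finset α → ℝ) (l : ℕ) (A B : Finset α) : ℝ :=
  (A.powerset.filter (fun C => C.card ≤ l)).sup' ⟨∅, by simp⟩ (fun C => marg f C B)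

/-- Union of the first `i` sets: x_0 ∪ ⋯ ∪ x_{i-1}. -/
def pref [DecidableEq α] (x : ℕ → Finset α) (i : ℕ) : Finset α := (Finset.range i).biUnion x

/-- A nominal greedy profile. -/
def NomGreedy [DecidableEq α] (f : Finset α → ℝ) (Ss : ℕ → Finset α) (k n : ℕ)
    (x : ℕ → Finset α) : Prop :=
  ∀ i < n, x i ⊆ Ss i ∧ (x i).card ≤ k ∧
    ∀ c : Finset α, c ⊆ Ss i → c.card ≤ k → f (c ∪ pref x i) ≤ f (x i ∪ pref x i)

/-- An augmented greedy profile. -/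
def AugGreedy [DecidableEq α] (f : Finset α → ℝ) (Ss : ℕ → Finset α) (k m n : ℕ)
    (x z : ℕ → Finset α) : Prop :=
  ∀ i < n,
    (x i ⊆ Ss i ∪ pref z i ∧ (x i).card ≤ k ∧
      ∀ c : Finset α, c ⊆ Ss i ∪ pref z i → c.card ≤ k →
        f (c ∪ pref x i) ≤ f (x i ∪ pref x i)) ∧
    ∃ zk zr : Finset α,
      z i = zk ∪ zr ∧ zk ⊆ Ss i ∧ zk.card ≤ min k m ∧
      (∀ w : Finset α, w ⊆ Ss i → w.card ≤ min k m →
        marg f w (pref x (i + 1)) ≤ marg f zk (pref x (i + 1))) ∧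
      zr ⊆ Ss i ∧ zr.card ≤ m - k

/-- The optimal value OPT(f, (S_i), k) over feasible profiles with n agents. -/
noncomputable def OPTval [DecidableEq α] [Fintype α] (f : Finset α → ℝ) (Ss : ℕ → Finset α)
    (n k : ℕ) : ℝ :=
  ((Finset.univ : Finset (Fin n → Finset α)).filter
      (fun y => ∀ i : Fin n, y i ⊆ Ss (i : ℕ) ∧ (y i).card ≤ k)).sup'
    ⟨(fun _ => ∅), by simp⟩ (fun y => f (Finset.univ.biUnion (fun i => y i)))

theorem marg_anti [DecidableEq α] (f : Finset α → ℝ) (hsub : IsSubmodularFn f)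
    (hmono : IsMonotoneFn f) (B C : Finset α) (hBC : B ⊆ C) (Z : Finset α) :
    marg f Z C ≤ marg f Z B := by
  unfold marg
  induction Z using Finset.induction_on with
  | empty => simp
  | insert a T ha ih =>
    rw [Finset.insert_union, Finset.insert_union]
    by_cases h : a ∈ T ∪ C
    · rw [Finset.insert_eq_of_mem h]
      have := hmono (T ∪ B) (insert a (T ∪ B)) (Finset.subset_insert _ _)
      linarith
    · have := hsub (T ∪ B) (T ∪ C) (Finset.union_subset_union_right hBC) a h
      linarith

theorem sum_marg_le [DecidableEq α] (f : Finset α → ℝ) (hsub : IsSubmodularFn f)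
    (B Z T : Finset α) (hT : T ⊆ Z) :
    ∑ z ∈ T, (f (Z ∪ B) - f (Z.erase z ∪ B)) ≤ f (T ∪ B) - f B := by
  induction T using Finset.induction_on with
  | empty => simp
  | insert a T ha ih =>
    have haZ : a ∈ Z := hT (Finset.mem_insert_self _ _)
    have ih' := ih (fun x hx => hT (Finset.mem_insert_of_mem hx))
    rw [Finset.sum_insert ha, Finset.insert_union]
    have e : insert a (Z.erase a ∪ B) = Z ∪ B := by
      rw [← Finset.insert_union, Finset.insert_erase haZ]
    by_cases h : a ∈ B
    · rw [Finset.insert_eq_of_mem (Finset.mem_union_right _ h)]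
      rw [Finset.insert_eq_of_mem (Finset.mem_union_right _ h)] at e
      rw [e]; linarith
    · have hs : T ∪ B ⊆ Z.erase a ∪ B := by
        apply Finset.union_subset_union_left
        intro x hx
        exact Finset.mem_erase.2 ⟨fun hxa => ha (hxa ▸ hx), hT (Finset.mem_insert_of_mem hx)⟩
      have := hsub _ _ hs a (by simp [h])
      rw [e] at this
      linarith

theorem avg_bound [DecidableEq α] (f : Finset α → ℝ) (hsub : IsSubmodularFn f)
    (k : ℕ) (hk : 1 ≤ k) (B S' : Finset α) (M : ℝ)
    (hM : ∀ W ⊆ S', W.card ≤ k → marg f W B ≤ M) (d : ℕ) :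
    ∀ Z ⊆ S', Z.card = k + d → (k : ℝ) * marg f Z B ≤ ((k : ℝ) + d) * M := by
  have hk0 : (1 : ℝ) ≤ k := by exact_mod_cast hk
  induction d with
  | zero =>
    intro Z hZ hc
    have := hM Z hZ (by omega)
    simp only [Nat.cast_zero, add_zero]
    exact mul_le_mul_of_nonneg_left this (by linarith)
  | succ d ih =>
    intro Z hZ hc
    have h1 := sum_marg_le f hsub B Z Z (Finset.Subset.refl _)
    have h2 : ∑ z ∈ Z, (k : ℝ) * marg f (Z.erase z) B ≤ ∑ z ∈ Z, ((k : ℝ) + d) * M := by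
      apply Finset.sum_le_sum
      intro z hz
      apply ih _ ((Finset.erase_subset _ _).trans hZ)
      rw [Finset.card_erase_of_mem hz]; omega
    have h3 : ∑ z ∈ Z, (f (Z ∪ B) - f (Z.erase z ∪ B))
        = ∑ z ∈ Z, (marg f Z B - marg f (Z.erase z) B) := by
      apply Finset.sum_congr rfl
      intro z _
      unfold marg; ring
    rw [h3, Finset.sum_sub_distrib, Finset.sum_const, hc, nsmul_eq_mul] at h1
    rw [← Finset.mul_sum, Finset.sum_const, hc, nsmul_eq_mul] at h2
    change _ ≤ marg f Z B at h1
    push_cast at h1 h2 ⊢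
    have hd : (0 : ℝ) ≤ d := Nat.cast_nonneg d
    have hp : (0 : ℝ) < (k : ℝ) + d := by linarith
    have h4 := mul_le_mul_of_nonneg_left h1 (show (0 : ℝ) ≤ k by linarith)
    refine le_of_mul_le_mul_left ?_ hp
    nlinarith

/-- Case m ≥ k in the proof of Theorem 2. -/
theorem stmt12 [DecidableEq α] [Fintype α] (f : Finset α → ℝ)
    (hnorm : f ∅ = 0) (hmono : IsMonotoneFn f) (hsub : IsSubmodularFn f)
    (k : ℕ) (hk : 1 ≤ k) (B S' X : Finset α)
    (hX : X ⊆ S') (hXcard : X.card ≤ k)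
    (hXmax : ∀ W ⊆ S', W.card ≤ k → marg f W B ≤ marg f X B) :
    (∀ Z ⊆ S', marg f Z (B ∪ X) ≤ max ((Z.card : ℝ) / k) 1 * marg f X B) ∧
    (∀ n m : ℕ, 2 ≤ n → k ≤ m → ∀ Z ⊆ S', Z.card ≤ min (k * (n - 1)) m →
      marg f Z (B ∪ X) ≤ min ((n : ℝ) - 1) ((m : ℝ) / k) * marg f X B) := by
  have hk0 : (0 : ℝ) < k := by exact_mod_cast hk
  have hM : 0 ≤ marg f X B := by
    have := hmono B (X ∪ B) Finset.subset_union_right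
    unfold marg; linarith
  have main : ∀ Z ⊆ S', marg f Z (B ∪ X) ≤ max ((Z.card : ℝ) / k) 1 * marg f X B := by
    intro Z hZ
    refine (marg_anti f hsub hmono B (B ∪ X) Finset.subset_union_left Z).trans ?_
    rcases le_total Z.card k with h | h
    · refine (hXmax Z hZ h).trans ?_
      have := mul_le_mul_of_nonneg_right (le_max_right ((Z.card : ℝ) / k) 1) hM
      linarith
    · obtain ⟨d, hd⟩ := Nat.exists_eq_add_of_le h
      have h1 := avg_bound f hsub k hk B S' _ hXmax d Z hZ hd
      refine le_trans ?_ (mul_le_mul_of_nonneg_right (le_max_left ((Z.card : ℝ) / k) 1) hM)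
      rw [div_mul_eq_mul_div, le_div_iff₀ hk0, hd]
      push_cast
      linarith
  refine ⟨main, ?_⟩
  intro n m hn hm Z hZ hc
  refine (main Z hZ).trans (mul_le_mul_of_nonneg_right ?_ hM)
  have hc1 : (Z.card : ℝ) ≤ k * ((n : ℝ) - 1) := by
    have h := hc.trans (min_le_left _ _)
    have h' : (Z.card : ℝ) ≤ ((k * (n - 1) : ℕ) : ℝ) := by exact_mod_cast h
    rwa [Nat.cast_mul, Nat.cast_sub (by omega), Nat.cast_one] at h'
  have hc2 : (Z.card : ℝ) ≤ m := by exact_mod_cast hc.trans (min_le_right _ _)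
  have hn' : (2 : ℝ) ≤ n := by exact_mod_cast hn
  have hm' : (k : ℝ) ≤ m := by exact_mod_cast hm
  refine max_le (le_min ?_ ?_) (le_min ?_ ?_)
  · rw [div_le_iff₀ hk0]; linarith
  · exact div_le_div_of_nonneg_right hc2 hk0.le
  · linarith
  · rw [le_div_iff₀ hk0]; linarith
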